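/- Let Q ⊂ ℙ^{N-1} be the common zero set of quadratic forms q_1,...,q_l with rk(q_{[1,l]}) ≥ 2l + e - 1 for some e ≥ 4, where rk denotes the minimum rank of a nonzero linear combination. Then Q is an irreducible reduced complete intersection of codimension l and codim(Sing Q ⊂ Q) ≥ e. -/

import Mathlib

open MvPolynomial

/-- The symmetric matrix (up to a factor 2) associated with a homogeneous degree-2
polynomial in `N` variables; its rank is the rank of the quadratic form. -/
noncomputable def polarMatrix {N : ℕ} (f : MvPolynomial (Fin N) ℂ) :
    Matrix (Fin N) (Fin N) ℂ := fun i j =>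
  if i = j then 2 * coeff (Finsupp.single i 2) f
  else coeff (Finsupp.single i 1 + Finsupp.single j 1) f

open IsLocalRing
universe u

theorem exists_complement_gens {R : Type*} [CommRing R] [IsLocalRing R] [IsNoetherianRing R]
    (k : ℕ) (q : Fin k → R) (hq : ∀ i, q i ∈ maximalIdeal R)
    (hind : ∀ c : Fin k → R, ∑ i, c i * q i ∈ maximalIdeal R ^ 2 → ∀ i, c i ∈ maximalIdeal R) :
    ∃ (n : ℕ) (y : Fin n → R), (maximalIdeal R).spanFinrank = n + k ∧
      maximalIdeal R = Ideal.span (Set.range y) ⊔ Ideal.span (Set.range q) := by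
  classical
  let V := CotangentSpace R
  let κ := ResidueField R
  let q' : Fin k → maximalIdeal R := fun i => ⟨q i, hq i⟩
  let v : Fin k → V := fun i => (maximalIdeal R).toCotangent (q' i)
  have hv : LinearIndependent κ v := by
    rw [Fintype.linearIndependent_iff]
    intro g hg
    choose c hc using fun i => residue_surjective (g i)
    have h1 : (maximalIdeal R).toCotangent (∑ i, c i • q' i) = 0 := by
      rw [map_sum, ← hg]
      refine Finset.sum_congr rfl fun i _ => ?_
      rw [map_smul, ← hc i]
      rfl
    rw [Ideal.toCotangent_eq_zero] at h1
    have h2 := hind c (by simpa [q'] using h1)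
    intro i
    rw [← hc i]
    exact (residue_eq_zero_iff _).2 (h2 i)
  let W := Submodule.span κ (Set.range v)
  have hW : Module.finrank κ W = k := by
    simpa using finrank_span_eq_card hv
  let n := Module.finrank κ (V ⧸ W)
  have hn : n + k = Module.finrank κ V := by
    rw [← hW]; exact Submodule.finrank_quotient_add_finrank W
  let b := Module.finBasis κ (V ⧸ W)
  have hsurj : ∀ z : V ⧸ W, ∃ y : maximalIdeal R, W.mkQ ((maximalIdeal R).toCotangent y) = z := by
    intro z
    obtain ⟨w, rfl⟩ := W.mkQ_surjective z
    obtain ⟨y, rfl⟩ := (maximalIdeal R).toCotangent_surjective w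
    exact ⟨y, rfl⟩
  choose y hy using fun i => hsurj (b i)
  refine ⟨n, fun i => (y i : R), ?_, ?_⟩
  · rw [hn, spanFinrank_maximalIdeal_eq_finrank_cotangentSpace]
  · have key : Submodule.span κ ((maximalIdeal R).toCotangent '' (Set.range y ∪ Set.range q')) = ⊤ := by
      rw [Set.image_union, Submodule.span_union, ← Set.range_comp, ← Set.range_comp]
      change _ ⊔ W = ⊤
      have : (Submodule.span κ (Set.range (⇑(maximalIdeal R).toCotangent ∘ y))).map W.mkQ = ⊤ := by
        rw [Submodule.map_span, ← Set.range_comp, ← b.span_eq]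
        congr 2
        funext i
        exact hy i
      rw [sup_comm, ← Submodule.map_mkQ_eq_top]
      exact this
    rw [CotangentSpace.span_image_eq_top_iff] at key
    have := congrArg (Submodule.map (Submodule.subtype (maximalIdeal R))) key
    rw [Submodule.map_span, Set.image_union, ← Set.range_comp, ← Set.range_comp, Submodule.map_top,
      Submodule.range_subtype, Submodule.span_union] at this
    exact this.symm

theorem regular_quot {R : Type*} [CommRing R] [IsRegularLocalRing R]
    (k : ℕ) (q : Fin k → R) (hq : ∀ i, q i ∈ maximalIdeal R)
    (hind : ∀ c : Fin k → R, ∑ i, c i * q i ∈ maximalIdeal R ^ 2 → ∀ i, c i ∈ maximalIdeal R) :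
    IsRegularLocalRing (R ⧸ Ideal.span (Set.range q)) ∧
    ringKrullDim (R ⧸ Ideal.span (Set.range q)) + k = ringKrullDim R := by
  obtain ⟨n, y, h1, h2⟩ := exists_complement_gens k q hq hind
  have hle : Ideal.span (Set.range q) ≤ maximalIdeal R := by
    rw [Ideal.span_le]; rintro _ ⟨i, rfl⟩; exact hq i
  have : Nontrivial (R ⧸ Ideal.span (Set.range q)) :=
    Ideal.Quotient.nontrivial_iff.2 (fun h => (maximalIdeal.isMaximal R).ne_top (top_le_iff.1 (h ▸ hle)))
  have hloc : IsLocalRing (R ⧸ Ideal.span (Set.range q)) :=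
    IsLocalRing.of_surjective' (Ideal.Quotient.mk _) Ideal.Quotient.mk_surjective
  have hmax : maximalIdeal (R ⧸ Ideal.span (Set.range q)) =
      Ideal.span (Set.range (fun i => Ideal.Quotient.mk (Ideal.span (Set.range q)) (y i))) := by
    have : maximalIdeal (R ⧸ Ideal.span (Set.range q)) =
        (maximalIdeal R).map (Ideal.Quotient.mk (Ideal.span (Set.range q))) := by
      exact (IsLocalRing.map_maximalIdeal_of_surjective _ Ideal.Quotient.mk_surjective).symm
    rw [this]
    conv_lhs => rw [h2]
    rw [Ideal.map_sup, Ideal.map_quotient_self, sup_bot_eq, Ideal.map_span, ← Set.range_comp]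
    rfl
  have hs : (maximalIdeal (R ⧸ Ideal.span (Set.range q))).spanFinrank ≤ n := by
    rw [hmax]
    refine (Submodule.spanFinrank_span_le_ncard_of_finite (Set.finite_range _)).trans ?_
    have h5 := Set.ncard_image_le (s := (Set.univ : Set (Fin n)))
      (f := fun i => Ideal.Quotient.mk (Ideal.span (Set.range q)) (y i)) Set.finite_univ
    rw [Set.image_univ] at h5
    refine h5.trans ?_
    simp [Set.ncard_univ]
  have hdim : ringKrullDim R ≤ ringKrullDim (R ⧸ Ideal.span (Set.range q)) + k := by
    refine (ringKrullDim_le_ringKrullDim_quotient_add_encard (Set.range q) ?_).trans ?_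
    · rw [IsLocalRing.ringJacobson_eq_maximalIdeal]
      rintro _ ⟨i, rfl⟩; exact hq i
    · gcongr
      have : (Set.range q).encard ≤ k := by
        rw [← Set.image_univ]
        refine (Set.encard_image_le _ _).trans ?_
        simp
      exact_mod_cast this
  have hR : ((n + k : ℕ) : WithBot ℕ∞) = ringKrullDim R := by
    rw [← h1]; exact IsRegularLocalRing.spanFinrank_maximalIdeal
  have h3 : ringKrullDim (R ⧸ Ideal.span (Set.range q)) ≤ n :=
    (ringKrullDim_le_spanFinrank_maximalIdeal _).trans (by exact_mod_cast hs)
  have h4 : (n : WithBot ℕ∞) ≤ ringKrullDim (R ⧸ Ideal.span (Set.range q)) := by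
    rw [← hR] at hdim
    push_cast at hdim
    have hk : (k : WithBot ℕ∞) = ((k : ℕ∞) : WithBot ℕ∞) := rfl
    generalize ringKrullDim (R ⧸ Ideal.span (Set.range q)) = D at *
    induction D using WithBot.recBotCoe with
    | bot => simp at hdim
    | coe D => 
      induction D using ENat.recTopCoe with
      | top => exact le_top
      | coe D => 
        have : n + k ≤ D + k := by exact_mod_cast hdim
        exact_mod_cast (by omega : n ≤ D)
  refine ⟨IsRegularLocalRing.of_spanFinrank_maximalIdeal_le _ (le_trans (by exact_mod_cast hs) h4), ?_⟩
  rw [le_antisymm h3 h4, ← hR]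
  push_cast; rfl

theorem regular_quot_one {R : Type*} [CommRing R] [IsRegularLocalRing R]
    (x : R) (hx : x ∈ maximalIdeal R) (hx2 : x ∉ maximalIdeal R ^ 2) :
    IsRegularLocalRing (R ⧸ Ideal.span {x}) ∧
    ringKrullDim (R ⧸ Ideal.span {x}) + 1 = ringKrullDim R := by
  have h := regular_quot 1 (fun _ => x) (fun _ => hx) (by
    intro c hc i
    rw [Fin.eq_zero i]
    simp only [Finset.univ_unique, Fin.default_eq_zero, Finset.sum_singleton] at hc
    by_contra hcon
    have hu : IsUnit (c 0) := by simpa using hcon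
    exact hx2 ((Ideal.unit_mul_mem_iff_mem _ hu).1 hc))
  rw [Set.range_const] at h
  simpa using h

theorem regular_isDomain_aux (d : ℕ) : ∀ (R : Type u) [CommRing R] [IsRegularLocalRing R],
    ringKrullDim R = d → IsDomain R := by
  induction d with
  | zero =>
    intro R _ _ h
    have h1 := IsRegularLocalRing.spanFinrank_maximalIdeal (R := R)
    rw [h] at h1
    have h2 : (maximalIdeal R).spanFinrank = 0 := by exact_mod_cast h1
    rw [Submodule.spanFinrank_eq_zero_iff_eq_bot (IsNoetherian.noetherian _)] at h2
    have := (IsLocalRing.isField_iff_maximalIdeal_eq).2 h2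
    exact this.isDomain
  | succ d ih =>
    intro R _ _ h
    have hm2 : ¬ maximalIdeal R ≤ maximalIdeal R ^ 2 := by
      intro hle
      have : maximalIdeal R = ⊥ := by
        apply Submodule.eq_bot_of_le_smul_of_le_jacobson_bot (maximalIdeal R) _
          (IsNoetherian.noetherian _)
        · rwa [smul_eq_mul, ← sq]
        · exact IsLocalRing.maximalIdeal_le_jacobson _
      have h1 := IsRegularLocalRing.spanFinrank_maximalIdeal (R := R)
      rw [this, h] at h1
      simp at h1
      exact_mod_cast h1
    have hmin : ∀ p ∈ minimalPrimes R, ¬ maximalIdeal R ≤ p := by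
      intro p hp hle
      have hpp : p.IsPrime := hp.1.1
      have : p = maximalIdeal R := le_antisymm (IsLocalRing.le_maximalIdeal hpp.ne_top) hle
      have h0 : p.height = 0 := Ideal.height_eq_zero_iff.2 hp
      rw [this] at h0
      have := IsLocalRing.maximalIdeal_height_eq_ringKrullDim (R := R)
      rw [h0, h] at this
      exact absurd this (by simp; exact_mod_cast (Nat.succ_ne_zero d).symm)
    have hav : ∃ x ∈ maximalIdeal R, x ∉ maximalIdeal R ^ 2 ∧ ∀ p ∈ minimalPrimes R, x ∉ p := by
      by_contra hcon
      push Not at hcon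
      have hfin : (insert (maximalIdeal R ^ 2) (minimalPrimes R)).Finite :=
        (minimalPrimes.finite_of_isNoetherianRing R).insert _
      have := (Ideal.subset_union_prime_finite (f := fun I : Ideal R => I) hfin (maximalIdeal R ^ 2) (maximalIdeal R ^ 2) (by
        intro i hi hne _
        rcases hi with rfl | hi
        · exact absurd rfl hne
        · exact hi.1.1) (I := maximalIdeal R)).1 (by
          intro x hx
          by_cases h2 : x ∈ maximalIdeal R ^ 2
          · exact Set.mem_biUnion (Set.mem_insert _ _) h2
          · obtain ⟨p, hp, hxp⟩ := hcon x hx h2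
            exact Set.mem_biUnion (Set.mem_insert_of_mem _ hp) hxp)
      obtain ⟨i, hi, hle⟩ := this
      rcases hi with rfl | hi
      · exact hm2 hle
      · exact hmin i hi hle
    obtain ⟨x, hx, hx2, hxp⟩ := hav
    obtain ⟨hreg, hdim⟩ := regular_quot_one x hx hx2
    have hdom : IsDomain (R ⧸ Ideal.span {x}) := by
      apply ih
      rw [h] at hdim
      generalize ringKrullDim (R ⧸ Ideal.span {x}) = D at hdim
      induction D using WithBot.recBotCoe with
      | bot => simp at hdim; exact absurd hdim.symm (by exact_mod_cast WithBot.coe_ne_bot)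
      | coe D =>
        induction D using ENat.recTopCoe with
        | top => exact absurd hdim (by exact_mod_cast (ENat.natCast_ne_top (d+1)).symm)
        | coe D =>
          have : D + 1 = d + 1 := by exact_mod_cast hdim
          exact_mod_cast (by omega : D = d)
    have hprime : (Ideal.span {x}).IsPrime := (Ideal.Quotient.isDomain_iff_prime _).1 hdom
    obtain ⟨p, hp, hpx⟩ := Ideal.exists_minimalPrimes_le (I := (⊥ : Ideal R)) (J := Ideal.span {x}) bot_le
    have hpp : p.IsPrime := hp.1.1
    have hpbot : p = ⊥ := by
      apply Submodule.eq_bot_of_le_smul_of_le_jacobson_bot (Ideal.span {x}) _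
          (IsNoetherian.noetherian _)
      · intro y hy
        obtain ⟨z, rfl⟩ := Ideal.mem_span_singleton.1 (hpx hy)
        rw [smul_eq_mul]
        refine Ideal.mul_mem_mul (Ideal.mem_span_singleton_self x) ?_
        exact (hpp.mem_or_mem hy).resolve_left (hxp p hp)
      · refine le_trans ?_ (IsLocalRing.maximalIdeal_le_jacobson _)
        rw [Ideal.span_le]; simpa using hx
    rw [hpbot] at hpp
    exact (IsDomain.of_bot_isPrime R)

theorem regular_dim_nat (R : Type u) [CommRing R] [IsRegularLocalRing R] :
    ∃ d : ℕ, ringKrullDim R = d := ⟨_, (IsRegularLocalRing.spanFinrank_maximalIdeal (R := R)).symm⟩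

theorem regular_isDomain (R : Type u) [CommRing R] [IsRegularLocalRing R] : IsDomain R := by
  obtain ⟨d, hd⟩ := regular_dim_nat R
  exact regular_isDomain_aux d R hd

open RingTheory.Sequence Pointwise in
theorem regular_exists_regular_aux (d : ℕ) : ∀ (R : Type u) [CommRing R] [IsRegularLocalRing R],
    ringKrullDim R = d → ∃ rs : List R, rs.length = d ∧ (∀ r ∈ rs, r ∈ maximalIdeal R) ∧
      IsRegular R rs := by
  induction d with
  | zero =>
    intro R _ _ h
    exact ⟨[], rfl, by simp, IsRegular.nil R R⟩
  | succ d ih =>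
    intro R _ _ h
    have := regular_isDomain R
    have hm2 : ¬ maximalIdeal R ≤ maximalIdeal R ^ 2 := by
      intro hle
      have : maximalIdeal R = ⊥ := by
        apply Submodule.eq_bot_of_le_smul_of_le_jacobson_bot (maximalIdeal R) _
          (IsNoetherian.noetherian _)
        · rwa [smul_eq_mul, ← sq]
        · exact IsLocalRing.maximalIdeal_le_jacobson _
      have h1 := IsRegularLocalRing.spanFinrank_maximalIdeal (R := R)
      rw [this, h] at h1
      simp at h1
      exact_mod_cast h1
    obtain ⟨x, hx, hx2⟩ := SetLike.not_le_iff_exists.1 hm2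
    have hx0 : x ≠ 0 := by rintro rfl; exact hx2 (zero_mem _)
    obtain ⟨hreg, hdim⟩ := regular_quot_one x hx hx2
    have hD : ringKrullDim (R ⧸ Ideal.span {x}) = d := by
      rw [h] at hdim
      generalize ringKrullDim (R ⧸ Ideal.span {x}) = D at hdim
      induction D using WithBot.recBotCoe with
      | bot => simp at hdim; exact absurd hdim.symm (by exact_mod_cast WithBot.coe_ne_bot)
      | coe D =>
        induction D using ENat.recTopCoe with
        | top => exact absurd hdim (by exact_mod_cast (ENat.natCast_ne_top (d+1)).symm)
        | coe D =>
          have : D + 1 = d + 1 := by exact_mod_cast hdim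
          exact_mod_cast (by omega : D = d)
    obtain ⟨rs, hl, hm, hr⟩ := ih _ hD
    obtain ⟨rs', rfl⟩ : ∃ rs' : List R, rs'.map (Ideal.Quotient.mk (Ideal.span {x})) = rs :=
      List.map_surjective_iff.2 Ideal.Quotient.mk_surjective rs
    refine ⟨x :: rs', by simpa using hl, ?_, ?_⟩
    · intro r hr'
      rcases List.mem_cons.1 hr' with rfl | hr'
      · exact hx
      · have := hm _ (List.mem_map_of_mem hr')
        rw [← IsLocalRing.map_maximalIdeal_of_surjective (Ideal.Quotient.mk (Ideal.span {x})) Ideal.Quotient.mk_surjective] at this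
        by_contra hcon
        have hu : IsUnit r := by simpa using hcon
        have := Ideal.eq_top_of_isUnit_mem _ this (hu.map _)
        rw [IsLocalRing.map_maximalIdeal_of_surjective (Ideal.Quotient.mk (Ideal.span {x})) Ideal.Quotient.mk_surjective] at this
        exact (maximalIdeal.isMaximal _).ne_top this
    · rw [isRegular_cons_iff']
      refine ⟨fun a b hab => mul_left_cancel₀ hx0 hab, ?_⟩
      have e0 : x • (⊤ : Submodule R R) = Ideal.span {x} := by
        rw [← Submodule.ideal_span_singleton_smul]
        simp
      have e : QuotSMulTop x R ≃ₗ[R ⧸ Ideal.span {x}] (R ⧸ Ideal.span {x}) :=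
        LinearEquiv.extendScalarsOfSurjective Ideal.Quotient.mk_surjective
          (Submodule.quotEquivOfEq _ _ e0)
      exact (e.isRegular_congr _).2 hr


open RingTheory.Sequence CategoryTheory Abelian Limits Pointwise in
theorem hom_subsingleton_of_ext {R : Type u} [CommRing R] (N : ModuleCat.{u} R) (rs : List R) :
    ∀ (M : ModuleCat.{u} R), IsWeaklyRegular M rs →
    (∀ i < rs.length + 1, Subsingleton (Ext N M i)) →
    Subsingleton (N →ₗ[R] (M ⧸ (Ideal.ofList rs • ⊤ : Submodule R M))) := by
  induction rs with
  | nil =>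
    intro M _ h
    have h0 : Subsingleton (N →ₗ[R] M) :=
      (Ext.addEquiv₀.trans ModuleCat.homAddEquiv).symm.subsingleton_congr.2 (h 0 (by simp))
    have e : (M ⧸ (Ideal.ofList ([] : List R) • ⊤ : Submodule R M)) ≃ₗ[R] M :=
      Submodule.quotEquivOfEqBot _ (by rw [Ideal.ofList_nil]; exact Submodule.bot_smul _)
    exact (LinearEquiv.congrRight (M := N) e).toEquiv.subsingleton
  | cons x rs ih =>
    intro M hM h
    rw [isWeaklyRegular_cons_iff] at hM
    have h_ext' : ∀ i < rs.length + 1, Subsingleton (Ext N (ModuleCat.of R (QuotSMulTop x M)) i) := by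
      intro i hi
      have zero1 := AddCommGrpCat.isZero_of_iff_subsingleton.mpr (h i (by simp; omega))
      have zero2 := AddCommGrpCat.isZero_of_iff_subsingleton.mpr (h (i + 1) (by simp; omega))
      exact AddCommGrpCat.subsingleton_of_isZero <| ShortComplex.Exact.isZero_of_both_zeros
        ((Ext.covariant_sequence_exact₃' N hM.1.smulShortComplex_shortExact) i (i + 1) rfl)
        (zero1.eq_zero_of_src _) (zero2.eq_zero_of_tgt _)
    have := ih (ModuleCat.of R (QuotSMulTop x M)) hM.2 h_ext'
    exact (LinearEquiv.congrRight (M := N)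
      (Submodule.quotOfListConsSMulTopEquivQuotSMulTopInner M x rs)).toEquiv.subsingleton

open RingTheory.Sequence CategoryTheory Abelian Limits Pointwise in
theorem regular_depth {R : Type u} [CommRing R] [IsRegularLocalRing R] (gs : List R)
    (hgs : IsWeaklyRegular R gs) (x : R) (hx : x ∉ Ideal.ofList gs)
    (hmx : ∀ y ∈ maximalIdeal R, y * x ∈ Ideal.ofList gs) :
    ringKrullDim R ≤ gs.length := by
  obtain ⟨d, hd⟩ := regular_dim_nat R
  obtain ⟨rs, hl, hm, hr⟩ := regular_exists_regular_aux d R hd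
  rw [hd]
  by_contra hcon
  have hlt : gs.length < d := by
    by_contra h; exact hcon (by exact_mod_cast not_lt.1 h)
  have hext := ModuleCat.subsingleton_ext_of_exists_isRegular (maximalIdeal R)
    (ModuleCat.of R (R ⧸ maximalIdeal R)) (by
      change Module.support R (R ⧸ maximalIdeal R) ⊆ _
      rw [Module.support_eq_zeroLocus, Ideal.annihilator_quotient]) (ModuleCat.of R R)
    (by
      change maximalIdeal R • (⊤ : Submodule R R) < ⊤
      simpa using (maximalIdeal.isMaximal R).ne_top.lt_top) rs hm hr
  have hs := hom_subsingleton_of_ext (ModuleCat.of R (R ⧸ maximalIdeal R)) gs (ModuleCat.of R R) hgs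
    (fun i hi => hext i (by omega))
  let f : (R ⧸ maximalIdeal R) →ₗ[R] (R ⧸ (Ideal.ofList gs • ⊤ : Submodule R R)) :=
    Submodule.liftQ _ ((Submodule.mkQ _).comp (LinearMap.toSpanSingleton R R x)) (by
      intro y hy
      simp only [LinearMap.mem_ker, LinearMap.comp_apply, LinearMap.toSpanSingleton_apply,
        Submodule.mkQ_apply, Submodule.Quotient.mk_eq_zero]
      simpa using hmx y hy)
  have hf : f = 0 := Subsingleton.elim (α := (ModuleCat.of R (R ⧸ maximalIdeal R)) →ₗ[R] ((ModuleCat.of R R) ⧸ (Ideal.ofList gs • ⊤ : Submodule R R))) f 0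
  have h1 : f (Submodule.Quotient.mk 1) = 0 := by rw [hf]; rfl
  rw [Submodule.liftQ_apply] at h1
  simp only [LinearMap.comp_apply, LinearMap.toSpanSingleton_apply,
        Submodule.mkQ_apply, Submodule.Quotient.mk_eq_zero, one_smul] at h1
  exact hx (by simpa using h1)

open RingTheory.Sequence in
/-- associated primes of a weakly regular sequence in a regular ring have small height -/
theorem height_le_of_colon {A : Type u} [CommRing A] [IsRegularRing A] (gs : List A)
    (hgs : IsWeaklyRegular A gs) (P : Ideal A) [hP : P.IsPrime] (x : A)
    (hx : ∀ y, y ∈ P ↔ y * x ∈ Ideal.ofList gs) :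
    P.height ≤ gs.length := by
  have hreg := hgs.of_isLocalization (Localization.AtPrime P) P.primeCompl
  have hmap : Ideal.ofList (gs.map (algebraMap A (Localization.AtPrime P))) =
      (Ideal.ofList gs).map (algebraMap A (Localization.AtPrime P)) := by
    rw [Ideal.map_ofList]
  have key := regular_depth _ hreg (algebraMap A (Localization.AtPrime P) x) (by
      rw [hmap, IsLocalization.algebraMap_mem_map_algebraMap_iff P.primeCompl]
      rintro ⟨m, hm, hmx⟩
      exact hm ((hx m).2 hmx)) (by
      rw [hmap]
      intro y hy
      rw [← Localization.AtPrime.map_eq_maximalIdeal] at hy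
      have : P.map (algebraMap A (Localization.AtPrime P)) ≤
        ((Ideal.ofList gs).map (algebraMap A (Localization.AtPrime P))).colon {algebraMap A (Localization.AtPrime P) x} := by
        rw [Ideal.map_le_iff_le_comap]
        intro z hz
        rw [Ideal.mem_comap, Submodule.mem_colon_singleton, smul_eq_mul, ← map_mul]
        exact Ideal.mem_map_of_mem _ ((hx z).1 hz)
      simpa [Submodule.mem_colon_singleton] using this hy)
  rw [List.length_map, IsLocalization.AtPrime.ringKrullDim_eq_height P] at key
  exact_mod_cast key

open scoped Polynomial in
theorem height_trdeg_step {k R : Type} [Field k] [CommRing R] [IsNoetherianRing R] [Algebra k R] (n : ℕ)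
    (h : ∀ p : Ideal R, p.IsPrime → ∀ m : ℕ, Algebra.trdeg k (R ⧸ p) ≤ m → (n : ℕ∞) ≤ p.height + m)
    (P : Ideal R[X]) (hP : P.IsPrime) (m : ℕ) (hm : Algebra.trdeg k (R[X] ⧸ P) ≤ m) :
    ((n + 1 : ℕ) : ℕ∞) ≤ P.height + m := by
  let p : Ideal R := P.comap Polynomial.C
  have hp : p.IsPrime := Ideal.IsPrime.comap Polynomial.C
  have hle : p.map Polynomial.C ≤ P := Ideal.map_comap_le
  have hpC : (p.map (Polynomial.C : R →+* R[X])).IsPrime := Ideal.isPrime_map_C_of_isPrime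
  have hcomap : (p.map (Polynomial.C : R →+* R[X])).comap Polynomial.C = p :=
    le_antisymm (Ideal.comap_mono hle) Ideal.le_comap_map
  have : (p.map (Polynomial.C : R →+* R[X])).LiesOver p := ⟨hcomap.symm⟩
  have hht : p.height ≤ (p.map (Polynomial.C : R →+* R[X])).height := by
    rw [Ideal.height_eq_height_add_of_liesOver_of_hasGoingDown p (p.map (Polynomial.C : R →+* R[X]))]
    exact le_self_add
  rcases eq_or_lt_of_le hle with heq | hlt
  · have key : Algebra.trdeg k (R ⧸ p) + 1 ≤ m := by
      have e : (R ⧸ p)[X] ≃ₐ[k] R[X] ⧸ P := by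
        rw [← heq]
        refine AlgEquiv.ofRingEquiv (f := Ideal.polynomialQuotientEquivQuotientPolynomial p) ?_
        intro r
        have := Ideal.polynomialQuotientEquivQuotientPolynomial_map_mk p (Polynomial.C (algebraMap k R r))
        rw [Polynomial.map_C] at this
        exact this
      have h1 := _root_.trdeg_add_eq k (R ⧸ p) (A := (R ⧸ p)[X])
      rw [Polynomial.trdeg_of_isDomain, e.trdeg_eq] at h1
      rw [h1]; exact hm
    obtain ⟨m', rfl⟩ : ∃ m', m = m' + 1 := by
      cases m with
      | zero => simp at key
      | succ m' => exact ⟨m', rfl⟩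
    have key2 : Algebra.trdeg k (R ⧸ p) ≤ m' := by
      push_cast at key
      exact (Cardinal.add_one_le_add_one_iff).1 key
    have := h p hp m' key2
    rw [← heq]
    push_cast
    rw [← add_assoc]
    gcongr
    exact this.trans (by gcongr)
  · have h1 := Ideal.height_add_one_le_of_lt_of_isPrime hlt
    have key : Algebra.trdeg k (R ⧸ p) ≤ m := by
      refine le_trans ?_ hm
      let f : R ⧸ p →ₐ[k] R[X] ⧸ P := Ideal.quotientMapₐ P (Polynomial.CAlgHom (R := k) (A := R)) le_rfl
      exact _root_.trdeg_le_of_injective f (Ideal.quotientMap_injective (I := P) (f := Polynomial.C))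
    have := h p hp m key
    push_cast
    calc (n : ℕ∞) + 1 ≤ (p.height + m) + 1 := by gcongr
      _ = (p.height + 1) + m := by ring
      _ ≤ _ := by
        gcongr
        exact le_trans (by gcongr) h1

theorem height_trdeg {k : Type} [Field k] (n : ℕ) : ∀ (P : Ideal (MvPolynomial (Fin n) k)),
    P.IsPrime → ∀ (m : ℕ), Algebra.trdeg k (MvPolynomial (Fin n) k ⧸ P) ≤ m →
    ((n : ℕ) : ℕ∞) ≤ P.height + m := by
  induction n with
  | zero => intro P _ m _; simp
  | succ n ih =>
    intro P hP m hm
    let e := MvPolynomial.finSuccEquiv k n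
    let P' : Ideal (Polynomial (MvPolynomial (Fin n) k)) := P.comap e.symm.toRingEquiv
    have hP' : P'.IsPrime := Ideal.IsPrime.comap _
    have hh : P'.height = P.height := by
      exact RingEquiv.height_comap e.symm.toRingEquiv P
    rw [← hh]
    refine height_trdeg_step n ih P' hP' m ?_
    refine le_trans ?_ hm
    refine _root_.trdeg_le_of_injective (Ideal.quotientMapₐ P e.symm.toAlgHom le_rfl) ?_
    refine (injective_iff_map_eq_zero _).2 fun a ha => ?_
    obtain ⟨a, rfl⟩ := Ideal.Quotient.mk_surjective a
    have ha' : Ideal.Quotient.mk P (e.symm a) = 0 := ha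
    rw [Ideal.Quotient.eq_zero_iff_mem] at ha' ⊢
    exact ha'

theorem exists_cols_li {F : Type*} [Field F] {m n : ℕ} (M : Matrix (Fin m) (Fin n) F) (r : ℕ)
    (hr : r ≤ M.rank) : ∃ g : Fin r → Fin n, LinearIndependent F (M.submatrix id g).col := by
  obtain ⟨f, hf, -, hli⟩ := Submodule.exists_fun_fin_finrank_span_eq F (Set.range M.col)
  rw [Matrix.rank_eq_finrank_span_cols] at hr
  choose g hg using hf
  refine ⟨fun i => g (Fin.castLE hr i), ?_⟩
  have := hli.comp (Fin.castLE hr) (Fin.castLE_injective hr)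
  have e : (M.submatrix id fun i => g (Fin.castLE hr i)).col = f ∘ Fin.castLE hr := by
    funext i
    simp only [Function.comp, ← hg]
    rfl
  rw [e]
  exact this

theorem exists_minor {F : Type*} [Field F] {m n : ℕ} (M : Matrix (Fin m) (Fin n) F) (r : ℕ)
    (hr : r ≤ M.rank) : ∃ (f : Fin r → Fin m) (g : Fin r → Fin n), (M.submatrix f g).det ≠ 0 := by
  obtain ⟨g, hg⟩ := exists_cols_li M r hr
  have h1 : r ≤ (M.submatrix id g).transpose.rank := by
    rw [LinearIndependent.rank_matrix (M := (M.submatrix id g).transpose) hg]; simp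
  obtain ⟨f, hf⟩ := exists_cols_li _ r h1
  refine ⟨f, g, ?_⟩
  have h2 := Matrix.linearIndependent_cols_iff_isUnit.1 hf
  rw [Matrix.isUnit_iff_isUnit_det, ← Matrix.det_transpose] at h2
  exact h2.ne_zero

theorem rows_dependent {F : Type*} [Field F] {m n : ℕ} (M : Matrix (Fin m) (Fin n) F)
    (h : ∀ g : Fin m → Fin n, (M.submatrix id g).det = 0) :
    ∃ lam : Fin m → F, lam ≠ 0 ∧ ∀ j, ∑ i, lam i * M i j = 0 := by
  by_cases hli : LinearIndependent F M.row
  · obtain ⟨g, hg⟩ := exists_cols_li M m (by rw [hli.rank_matrix]; simp)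
    have h2 := Matrix.linearIndependent_cols_iff_isUnit.1 hg
    rw [Matrix.isUnit_iff_isUnit_det] at h2
    exact absurd (h g) h2.ne_zero
  · obtain ⟨lam, h1, i, hi⟩ := Fintype.not_linearIndependent_iff.1 hli
    refine ⟨lam, fun h => hi (by rw [h]; rfl), fun j => ?_⟩
    have := congrFun h1 j
    simpa using this

theorem le_rank_of_minor {F : Type*} [Field F] {m n : ℕ} (M : Matrix (Fin m) (Fin n) F) (r : ℕ)
    (f : Fin r → Fin m) (g : Fin r → Fin n) (h : (M.submatrix f g).det ≠ 0) : r ≤ M.rank := by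
  have h1 : (M.submatrix f g).rank = r := by
    rw [Matrix.rank_of_isUnit _ ((Matrix.isUnit_iff_isUnit_det _).2 (isUnit_iff_ne_zero.2 h))]
    simp
  rw [← h1]
  exact Matrix.rank_submatrix_le _ _ _

theorem rank_specialize {K : Type*} [Field K] [Algebra ℂ K] {l N r : ℕ}
    (B : Fin l → Matrix (Fin N) (Fin N) ℂ)
    (hB : ∀ lam : Fin l → ℂ, lam ≠ 0 → r ≤ (∑ i, lam i • B i).rank)
    (lam : Fin l → K) (k : Fin l) (hk : lam k = 1) :
    r ≤ (∑ i, lam i • (B i).map (algebraMap ℂ K)).rank := by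
  by_contra hcon
  let φ : MvPolynomial (Fin l) ℂ →ₐ[ℂ] K := MvPolynomial.aeval lam
  let M : Matrix (Fin N) (Fin N) (MvPolynomial (Fin l) ℂ) :=
    ∑ i, (MvPolynomial.X i : MvPolynomial (Fin l) ℂ) • (B i).map MvPolynomial.C
  have hne : RingHom.ker φ ≠ ⊤ := RingHom.ker_ne_top _
  obtain ⟨m, hm, hle⟩ := Ideal.exists_le_maximal _ hne
  obtain ⟨z, hz⟩ := MvPolynomial.isMaximal_iff_eq_vanishingIdeal_singleton.1 hm
  have hz' : ∀ p, φ p = 0 → MvPolynomial.aeval z p = 0 := by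
    intro p hp
    have : p ∈ m := hle hp
    rw [hz] at this
    exact MvPolynomial.mem_vanishingIdeal_singleton_iff _ _ |>.1 this
  have hzk : z k = 1 := by
    have := hz' (MvPolynomial.X k - 1) (by simp [φ, hk])
    simpa [sub_eq_zero] using this
  have hz0 : z ≠ 0 := fun h => by simp [h] at hzk
  obtain ⟨f, g, hfg⟩ := exists_minor _ r (hB z hz0)
  have key : ∀ (L : Type _) [Field L] [Algebra ℂ L] (w : Fin l → L),
      MvPolynomial.aeval w (M.submatrix f g).det =
      ((∑ i, w i • (B i).map (algebraMap ℂ L)).submatrix f g).det := by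
    intro L _ _ w
    change (MvPolynomial.aeval w : MvPolynomial (Fin l) ℂ →ₐ[ℂ] L).toRingHom _ = _
    rw [RingHom.map_det]
    congr 1
    ext a b
    simp [M, Matrix.sum_apply]
  refine hfg ?_
  have h1 := hz' (M.submatrix f g).det (by
    by_contra h
    exact hcon (le_rank_of_minor _ r f g (by rw [← key]; exact h)))
  have h2 : MvPolynomial.aeval z (M.submatrix f g).det = ((∑ i, z i • B i).submatrix f g).det := by
    change (MvPolynomial.aeval z : MvPolynomial (Fin l) ℂ →ₐ[ℂ] ℂ).toRingHom _ = _
    rw [RingHom.map_det]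
    congr 1
    ext a b
    simp [M, Matrix.sum_apply]
  rw [← h2, h1]

theorem trdeg_bound {F : Type} [Field F] [Algebra ℂ F] {l N r : ℕ} (x : Fin N → F)
    (hx : IntermediateField.adjoin ℂ (Set.range x) = ⊤)
    (B : Fin l → Matrix (Fin N) (Fin N) ℂ)
    (hB : ∀ lam : Fin l → ℂ, lam ≠ 0 → r ≤ (∑ i, lam i • B i).rank)
    (lam : Fin l → F) (k : Fin l) (hk : lam k = 1)
    (h0 : ∀ j, ∑ i, lam i * ∑ a, algebraMap ℂ F (B i j a) * x a = 0) :
    r ≤ N ∧ Algebra.trdeg ℂ F ≤ ((l - 1 + (N - r) : ℕ) : Cardinal) := by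
  classical
  obtain ⟨f, g, hfg⟩ := exists_minor _ r (rank_specialize B hB lam k hk)
  have hginj : Function.Injective g := by
    intro a b hab
    by_contra hne
    exact hfg (Matrix.det_zero_of_column_eq hne (fun i => by simp [hab]))
  have hrN : r ≤ N := by simpa using Fintype.card_le_of_injective g hginj
  refine ⟨hrN, ?_⟩
  let T : Finset F := (Finset.univ.erase k).image lam ∪ (Finset.univ.image g)ᶜ.image x
  have hT : T.card ≤ l - 1 + (N - r) := by
    refine (Finset.card_union_le _ _).trans (add_le_add ?_ ?_)
    · refine Finset.card_image_le.trans ?_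
      simp
    · refine Finset.card_image_le.trans ?_
      rw [Finset.card_compl, Finset.card_image_of_injective _ hginj]
      simp
  let L := IntermediateField.adjoin ℂ (T : Set F)
  have hTL : ∀ t ∈ T, t ∈ L := fun t ht => IntermediateField.subset_adjoin ℂ _ ht
  have hlamL : ∀ i, lam i ∈ L := by
    intro i
    by_cases hi : i = k
    · rw [hi, hk]; exact L.one_mem
    · exact hTL _ (Finset.mem_union_left _ (Finset.mem_image_of_mem _ (by simp [hi])))
  have hxc : ∀ a, a ∉ Finset.univ.image g → x a ∈ L := fun a ha =>
    hTL _ (Finset.mem_union_right _ (Finset.mem_image_of_mem _ (by simpa using ha)))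
  let lam' : Fin l → L := fun i => ⟨lam i, hlamL i⟩
  let M : Matrix (Fin N) (Fin N) L := ∑ i, lam' i • (B i).map (algebraMap ℂ L)
  have hM : ∀ j a, algebraMap L F (M j a) = ∑ i, lam i * algebraMap ℂ F (B i j a) := by
    intro j a
    simp only [M, Matrix.sum_apply, map_sum, Matrix.smul_apply, Matrix.map_apply, smul_eq_mul,
      map_mul]
    rfl
  have hM0 : ∀ j, ∑ a, algebraMap L F (M j a) * x a = 0 := by
    intro j
    rw [← h0 j]
    simp only [hM, Finset.sum_mul, Finset.mul_sum]
    rw [Finset.sum_comm]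
    simp only [mul_assoc]
  let P := M.submatrix f g
  have hP : P.det ≠ 0 := by
    intro h
    apply hfg
    have := congrArg (algebraMap L F) h
    rw [RingHom.map_det, map_zero] at this
    rw [← this]
    congr 1
    ext a b
    simp only [P, RingHom.mapMatrix_apply, Matrix.map_apply, Matrix.submatrix_apply, hM]
    simp [Matrix.sum_apply]
  have hPinv : P⁻¹ * P = 1 := Matrix.nonsing_inv_mul _ (isUnit_iff_ne_zero.2 hP)
  have hrow : ∀ b, ∑ c, algebraMap L F (P b c) * x (g c) ∈ L := by
    intro b
    have h1 := hM0 (f b)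
    rw [← Finset.sum_add_sum_compl (Finset.univ.image g),
      Finset.sum_image hginj.injOn] at h1
    have h2 := eq_neg_of_add_eq_zero_left h1
    change ∑ c, algebraMap L F (M (f b) (g c)) * x (g c) ∈ L
    rw [h2]
    refine L.neg_mem (L.sum_mem fun a ha => L.mul_mem (M (f b) a).2 (hxc a (by simpa using ha)))
  have hxg : ∀ a, x (g a) ∈ L := by
    intro a
    have h1 : ∑ b, algebraMap L F (P⁻¹ a b) * ∑ c, algebraMap L F (P b c) * x (g c) = x (g a) := by
      simp only [Finset.mul_sum]
      rw [Finset.sum_comm]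
      have : ∀ c, ∑ b, algebraMap L F (P⁻¹ a b) * (algebraMap L F (P b c) * x (g c)) =
          if a = c then x (g c) else 0 := by
        intro c
        have h3 := congrArg (algebraMap L F) (congrFun (congrFun hPinv a) c)
        rw [Matrix.mul_apply, map_sum, Matrix.one_apply] at h3
        simp only [← mul_assoc, ← Finset.sum_mul, ← map_mul] at h3 ⊢
        rw [← map_sum] at h3 ⊢
        rw [h3]
        split_ifs <;> simp
      simp only [this]
      simp
    rw [← h1]
    exact L.sum_mem fun b _ => L.mul_mem (P⁻¹ a b).2 (hrow b)
  have hLtop : L = ⊤ := by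
    rw [eq_top_iff, ← hx, IntermediateField.adjoin_le_iff]
    rintro _ ⟨a, rfl⟩
    by_cases ha : a ∈ Finset.univ.image g
    · obtain ⟨b, -, rfl⟩ := Finset.mem_image.1 ha
      exact hxg b
    · exact hxc a ha
  have halg : Algebra.IsAlgebraic (Algebra.adjoin ℂ (T : Set F)) F := by
    refine ⟨fun y => ?_⟩
    have hy : y ∈ L := by rw [hLtop]; trivial
    obtain ⟨a, ha, b, hb, rfl⟩ := IntermediateField.mem_adjoin_iff_div.1 hy
    rw [div_eq_mul_inv]
    exact (isAlgebraic_algebraMap (⟨a, ha⟩ : Algebra.adjoin ℂ (T : Set F))).mul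
      (isAlgebraic_algebraMap (⟨b, hb⟩ : Algebra.adjoin ℂ (T : Set F))).inv
  have := Algebra.IsAlgebraic.trdeg_le_cardinalMk ℂ (T : Set F)
  refine this.trans ?_
  rw [Finset.coe_sort_coe, Cardinal.mk_coe_finset]
  exact_mod_cast hT

theorem pderiv_quadratic {N : ℕ} (f : MvPolynomial (Fin N) ℂ) (hf : f.IsHomogeneous 2) (j : Fin N) :
    pderiv j f = ∑ a, C (polarMatrix f j a) * X a := by
  ext m
  rw [coeff_sum]
  simp only [coeff_C_mul, coeff_X, mul_ite, mul_one, mul_zero]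
  by_cases hm : m.degree = 1
  · obtain ⟨i, rfl⟩ : ∃ i, m = Finsupp.single i 1 := by
      have h : m ∈ {d : Fin N →₀ ℕ | d.degree = 1} := hm
      rw [← Finsupp.range_single_one] at h
      obtain ⟨i, hi⟩ := h
      exact ⟨i, hi.symm⟩
    rw [coeff_pderiv]
    have : ∀ a, (Finsupp.single a 1 = Finsupp.single i 1) ↔ a = i := fun a =>
      ⟨fun h => Finsupp.single_left_injective one_ne_zero h, fun h => by rw [h]⟩
    simp only [this, Finset.sum_ite_eq', Finset.mem_univ, if_true]
    unfold polarMatrix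
    split_ifs with h
    · subst h
      rw [← Finsupp.single_add]
      simp; ring
    · rw [add_comm]
      simp [Ne.symm h]
  · rw [(hf.pderiv (i := j)).coeff_eq_zero hm, Finset.sum_eq_zero]
    intro a _
    rw [if_neg]
    rintro rfl
    simp at hm

theorem height_of_minors {N l r : ℕ} (q : Fin l → MvPolynomial (Fin N) ℂ)
    (hhom : ∀ i, (q i).IsHomogeneous 2)
    (hB : ∀ lam : Fin l → ℂ, lam ≠ 0 → r ≤ (∑ i, lam i • polarMatrix (q i)).rank)
    (p : Ideal (MvPolynomial (Fin N) ℂ)) [hp : p.IsPrime]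
    (hmin : ∀ g : Fin l → Fin N, (Matrix.of fun i j => pderiv (g j) (q i)).det ∈ p) :
    ((r + 1 : ℕ) : ℕ∞) ≤ p.height + l := by
  let F := FractionRing (MvPolynomial (Fin N) ℂ ⧸ p)
  let φ : MvPolynomial (Fin N) ℂ →ₐ[ℂ] F :=
    (IsScalarTower.toAlgHom ℂ (MvPolynomial (Fin N) ℂ ⧸ p) F).comp (Ideal.Quotient.mkₐ ℂ p)
  have hφ0 : ∀ a, a ∈ p → φ a = 0 := by
    intro a ha
    change algebraMap (MvPolynomial (Fin N) ℂ ⧸ p) F (Ideal.Quotient.mk p a) = 0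
    rw [Ideal.Quotient.eq_zero_iff_mem.2 ha, map_zero]
  let x : Fin N → F := fun j => φ (X j)
  have hφ : φ = aeval x := by
    apply MvPolynomial.algHom_ext
    intro i
    simp [x]
  have hx : IntermediateField.adjoin ℂ (Set.range x) = ⊤ := by
    rw [eq_top_iff]
    intro y _
    have hmem : ∀ a, φ a ∈ IntermediateField.adjoin ℂ (Set.range x) := by
      intro a
      apply IntermediateField.algebra_adjoin_le_adjoin
      rw [Algebra.adjoin_range_eq_range_aeval, hφ]
      exact ⟨a, rfl⟩
    obtain ⟨a, b, hb, rfl⟩ := IsFractionRing.div_surjective (MvPolynomial (Fin N) ℂ ⧸ p) y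
    obtain ⟨a, rfl⟩ := Ideal.Quotient.mk_surjective a
    obtain ⟨b, rfl⟩ := Ideal.Quotient.mk_surjective b
    exact div_mem (hmem a) (hmem b)
  obtain ⟨lam, hlam, hrel⟩ := rows_dependent (Matrix.of fun i j => φ (pderiv j (q i))) (by
    intro g
    have := hφ0 _ (hmin g)
    change φ.toRingHom _ = 0 at this
    rw [RingHom.map_det] at this
    rw [← this]
    rfl)
  obtain ⟨k, hk⟩ : ∃ k, lam k ≠ 0 := by
    by_contra h
    push Not at h
    exact hlam (funext h)
  have key := trdeg_bound x hx (fun i => polarMatrix (q i)) hB (fun i => (lam k)⁻¹ * lam i) k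
    (inv_mul_cancel₀ hk) (by
      intro j
      have h1 := hrel j
      have h2 := congrArg (fun t => (lam k)⁻¹ * t) h1
      change (lam k)⁻¹ * _ = (lam k)⁻¹ * 0 at h2
      rw [mul_zero, Finset.mul_sum] at h2
      rw [← h2]
      refine Finset.sum_congr rfl fun i _ => ?_
      simp [mul_assoc, pderiv_quadratic _ (hhom i), x, map_sum, ← algebraMap_eq])
  obtain ⟨hrN, htr⟩ := key
  have htr2 : Algebra.trdeg ℂ (MvPolynomial (Fin N) ℂ ⧸ p) ≤ ((l - 1 + (N - r) : ℕ) : Cardinal) :=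
    (_root_.trdeg_le_of_injective (IsScalarTower.toAlgHom ℂ (MvPolynomial (Fin N) ℂ ⧸ p) F)
      (IsFractionRing.injective _ _)).trans htr
  have h0 := height_trdeg N p hp _ htr2
  have hl : 1 ≤ l := by have := k.2; omega
  generalize p.height = h at h0 ⊢
  induction h using ENat.recTopCoe with
  | top => simp
  | coe h => norm_cast at h0 ⊢; omega

theorem pderiv_mem_of_mem_sq {N : ℕ} (p : Ideal (MvPolynomial (Fin N) ℂ)) (j : Fin N)
    (f : MvPolynomial (Fin N) ℂ) (hf : f ∈ p ^ 2) : pderiv j f ∈ p := by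
  rw [pow_two] at hf
  refine Submodule.mul_induction_on hf ?_ ?_
  · intro a ha b hb
    rw [pderiv_mul]
    exact p.add_mem (p.mul_mem_left _ hb) (p.mul_mem_right _ ha)
  · intro a b ha hb
    rw [map_add]
    exact p.add_mem ha hb

theorem jacobian_global {N k : ℕ} (q : Fin k → MvPolynomial (Fin N) ℂ)
    (p : Ideal (MvPolynomial (Fin N) ℂ)) [hp : p.IsPrime] (hq : ∀ i, q i ∈ p)
    (g : Fin k → Fin N) (hg : (Matrix.of fun i j => pderiv (g j) (q i)).det ∉ p)
    (c : Fin k → MvPolynomial (Fin N) ℂ) (hc : ∑ i, c i * q i ∈ p ^ 2) (i : Fin k) : c i ∈ p := by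
  have h1 : ∀ j, ∑ i, c i * pderiv j (q i) ∈ p := by
    intro j
    have h := pderiv_mem_of_mem_sq p j _ hc
    rw [map_sum] at h
    simp only [pderiv_mul, Finset.sum_add_distrib] at h
    refine (p.add_mem_iff_right ?_).1 h
    exact p.sum_mem fun i _ => p.mul_mem_left _ (hq i)
  have hdet : ((Ideal.Quotient.mk p).mapMatrix (Matrix.of fun i j => pderiv (g j) (q i))).det ≠ 0 := by
    rw [← RingHom.map_det]
    rwa [Ne, Ideal.Quotient.eq_zero_iff_mem]
  have h2 := Matrix.eq_zero_of_vecMul_eq_zero hdet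
    (v := fun i => Ideal.Quotient.mk p (c i)) (by
      funext j
      have := Ideal.Quotient.eq_zero_iff_mem.2 (h1 (g j))
      rw [map_sum] at this
      simpa [Matrix.vecMul, dotProduct] using this)
  exact Ideal.Quotient.eq_zero_iff_mem.1 (congrFun h2 i)

theorem jacobian_local {N k : ℕ} (q : Fin k → MvPolynomial (Fin N) ℂ)
    (p : Ideal (MvPolynomial (Fin N) ℂ)) [hp : p.IsPrime] (hq : ∀ i, q i ∈ p)
    (g : Fin k → Fin N) (hg : (Matrix.of fun i j => pderiv (g j) (q i)).det ∉ p) :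
    (k : ℕ∞) ≤ p.height ∧ ∀ x y, x * y ∈ Ideal.span (Set.range q) →
      (∃ s ∉ p, s * x ∈ Ideal.span (Set.range q)) ∨
      (∃ s ∉ p, s * y ∈ Ideal.span (Set.range q)) := by
  let R := Localization.AtPrime p
  let q' : Fin k → R := fun i => algebraMap _ R (q i)
  have hspan : (Ideal.span (Set.range q)).map (algebraMap _ R) = Ideal.span (Set.range q') := by
    rw [Ideal.map_span, ← Set.range_comp]; rfl
  have hq' : ∀ i, q' i ∈ maximalIdeal R := fun i =>
    (IsLocalization.AtPrime.to_map_mem_maximal_iff R p (q i)).2 (hq i)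
  have hind : ∀ c : Fin k → R, ∑ i, c i * q' i ∈ maximalIdeal R ^ 2 → ∀ i, c i ∈ maximalIdeal R := by
    intro c hc i
    obtain ⟨b, hb⟩ := IsLocalization.exist_integer_multiples_of_finite p.primeCompl c
    choose a ha using hb
    have hbu : IsUnit (algebraMap _ R (b : MvPolynomial (Fin N) ℂ)) :=
      IsLocalization.map_units R b
    have h1 : algebraMap _ R (∑ i, a i * q i) ∈ maximalIdeal R ^ 2 := by
      have : algebraMap _ R (∑ i, a i * q i) = algebraMap _ R (b : MvPolynomial (Fin N) ℂ) *
          ∑ i, c i * q' i := by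
        rw [map_sum, Finset.mul_sum]
        refine Finset.sum_congr rfl fun i _ => ?_
        rw [map_mul, ha, Algebra.smul_def, mul_assoc]
      rw [this]
      exact Ideal.mul_mem_left _ _ hc
    rw [← Localization.AtPrime.map_eq_maximalIdeal, ← Ideal.map_pow,
      IsLocalization.algebraMap_mem_map_algebraMap_iff p.primeCompl] at h1
    obtain ⟨t, ht, h2⟩ := h1
    have h3 := jacobian_global q p hq g hg (fun i => t * a i) (by
      rw [Finset.mul_sum] at h2
      simpa only [mul_assoc] using h2) i
    have h4 : a i ∈ p := (hp.mem_or_mem h3).resolve_left ht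
    have h5 := (IsLocalization.AtPrime.to_map_mem_maximal_iff R p (a i)).2 h4
    rw [ha, Algebra.smul_def] at h5
    exact (Ideal.unit_mul_mem_iff_mem _ hbu).1 h5
  obtain ⟨hreg, hdim⟩ := regular_quot k q' hq' hind
  constructor
  · rw [IsLocalization.AtPrime.ringKrullDim_eq_height p R] at hdim
    have h0 : 0 ≤ ringKrullDim (R ⧸ Ideal.span (Set.range q')) := ringKrullDim_nonneg_of_nontrivial
    have : ((k : ℕ∞) : WithBot ℕ∞) ≤ (p.height : WithBot ℕ∞) := by
      rw [← hdim]
      exact le_add_of_nonneg_left h0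
    exact_mod_cast this
  · intro x y hxy
    have hdom := regular_isDomain (R ⧸ Ideal.span (Set.range q'))
    have hpr : (Ideal.span (Set.range q')).IsPrime := (Ideal.Quotient.isDomain_iff_prime _).1 hdom
    rw [← hspan] at hpr
    have h1 := Ideal.mem_map_of_mem (algebraMap _ R) hxy
    rw [map_mul] at h1
    rcases hpr.mem_or_mem h1 with h | h
    · left
      exact (IsLocalization.algebraMap_mem_map_algebraMap_iff p.primeCompl R _ _).1 h
    · right
      exact (IsLocalization.algebraMap_mem_map_algebraMap_iff p.primeCompl R _ _).1 h

open RingTheory.Sequence in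
theorem exists_nzd_of_height {A : Type u} [CommRing A] [IsRegularRing A] (gs : List A)
    (hgs : IsWeaklyRegular A gs) (K : Ideal A)
    (hK : ∀ P : Ideal A, P.IsPrime → Ideal.ofList gs ≤ P → K ≤ P → ((gs.length + 1 : ℕ) : ℕ∞) ≤ P.height) :
    ∃ a ∈ K, (∀ y, a * y ∈ Ideal.ofList gs → y ∈ Ideal.ofList gs) ∧ IsWeaklyRegular A (gs ++ [a]) := by
  have hnoeth : IsNoetherianRing A := inferInstance
  let M := A ⧸ (Ideal.ofList gs • ⊤ : Submodule A A)
  have hM : ∀ y : A, (Submodule.Quotient.mk y : M) = 0 ↔ y ∈ Ideal.ofList gs := by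
    intro y
    rw [Submodule.Quotient.mk_eq_zero, smul_eq_mul, Ideal.mul_top]
  have hfin := associatedPrimes.finite A M
  have hnot : ¬ ((K : Set A) ⊆ ⋃ p ∈ associatedPrimes A M, (p : Set A)) := by
    intro h
    replace h := (Ideal.subset_union_prime_finite hfin (f := id) ⊥ ⊥ (fun i hi _ _ => hi.1)).1 h
    obtain ⟨P, hP, hKP⟩ := h
    have hPp : P.IsPrime := hP.1
    obtain ⟨-, x, hx⟩ := isAssociatedPrime_iff.1 hP
    obtain ⟨x, rfl⟩ := Submodule.Quotient.mk_surjective _ x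
    have hx' : ∀ y, y ∈ P ↔ y * x ∈ Ideal.ofList gs := by
      intro y
      rw [hx, Submodule.mem_colon_singleton, Submodule.mem_bot, ← Submodule.Quotient.mk_smul]
      exact hM _
    have h1 := height_le_of_colon gs hgs P x hx'
    have h2 := hK P hPp (fun y hy => (hx' y).2 (Ideal.mul_mem_right _ _ hy)) hKP
    have h3 := h2.trans h1
    norm_cast at h3
    omega
  rw [biUnion_associatedPrimes_eq_compl_regular] at hnot
  obtain ⟨a, haK, ha⟩ := Set.not_subset.1 hnot
  have ha' : IsSMulRegular M a := by simpa using ha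
  refine ⟨a, haK, ?_, ?_⟩
  · intro y hy
    rw [isSMulRegular_iff_right_eq_zero_of_smul] at ha'
    have := ha' (Submodule.Quotient.mk y) (by
      rw [← Submodule.Quotient.mk_smul]
      exact (hM _).2 hy)
    exact (hM y).1 this
  · rw [isWeaklyRegular_append_iff]
    exact ⟨hgs, (isWeaklyRegular_singleton_iff _ _).2 ha'⟩

theorem height_ge_of_mem {N k r : ℕ} (hr : 2 * k ≤ r + 1) (q : Fin k → MvPolynomial (Fin N) ℂ)
    (hhom : ∀ i, (q i).IsHomogeneous 2)
    (hB : ∀ lam : Fin k → ℂ, lam ≠ 0 → r ≤ (∑ i, lam i • polarMatrix (q i)).rank)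
    (p : Ideal (MvPolynomial (Fin N) ℂ)) [hp : p.IsPrime] (hq : ∀ i, q i ∈ p) :
    (k : ℕ∞) ≤ p.height := by
  by_cases h : ∀ g : Fin k → Fin N, (Matrix.of fun i j => pderiv (g j) (q i)).det ∈ p
  · have h0 := height_of_minors q hhom hB p h
    generalize p.height = h at h0 ⊢
    induction h using ENat.recTopCoe with
    | top => simp
    | coe h => norm_cast at h0 ⊢; omega
  · push Not at h
    obtain ⟨g, hg⟩ := h
    exact (jacobian_local q p hq g hg).1

theorem ofList_ofFn {A : Type*} [CommRing A] {k : ℕ} (q : Fin k → A) :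
    Ideal.ofList (List.ofFn q) = Ideal.span (Set.range q) := by
  unfold Ideal.ofList
  congr 1
  ext x
  simp [List.mem_ofFn]

open RingTheory.Sequence in
theorem weakly_regular_quadrics {N r : ℕ} (k : ℕ) : ∀ (_ : 2 * k ≤ r + 1)
    (q : Fin k → MvPolynomial (Fin N) ℂ) (_ : ∀ i, (q i).IsHomogeneous 2)
    (_ : ∀ lam : Fin k → ℂ, lam ≠ 0 → r ≤ (∑ i, lam i • polarMatrix (q i)).rank),
    IsWeaklyRegular (MvPolynomial (Fin N) ℂ) (List.ofFn q) := by
  induction k with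
  | zero => intro _ q _ _; simp
  | succ k ih =>
    intro hr q hhom hB
    have hw := ih (by omega) (fun i => q i.castSucc) (fun i => hhom _) (by
      intro lam hlam
      have := hB (Fin.snoc lam 0) (by
        intro h
        apply hlam
        funext i
        have := congrFun h i.castSucc
        simpa using this)
      simpa [Fin.sum_univ_castSucc] using this)
    obtain ⟨a, ha, hy, -⟩ := exists_nzd_of_height _ hw (Ideal.span {q (Fin.last k)}) (by
      intro P hP h1 h2
      rw [List.length_ofFn]
      refine height_ge_of_mem hr q hhom hB P ?_
      intro i
      refine Fin.lastCases ?_ (fun i => ?_) i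
      · exact h2 (Ideal.subset_span rfl)
      · rw [ofList_ofFn] at h1
        exact h1 (Ideal.subset_span ⟨i, rfl⟩))
    obtain ⟨c, rfl⟩ := Ideal.mem_span_singleton'.1 ha
    rw [List.ofFn_succ', List.concat_eq_append, isWeaklyRegular_append_iff]
    refine ⟨hw, (isWeaklyRegular_singleton_iff _ _).2 ?_⟩
    rw [isSMulRegular_iff_right_eq_zero_of_smul]
    intro m hm
    obtain ⟨m, rfl⟩ := Submodule.Quotient.mk_surjective _ m
    rw [← Submodule.Quotient.mk_smul, Submodule.Quotient.mk_eq_zero, smul_eq_mul, smul_eq_mul, Ideal.mul_top] at hm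
    rw [Submodule.Quotient.mk_eq_zero, smul_eq_mul, Ideal.mul_top]
    apply hy
    rw [mul_assoc]
    exact Ideal.mul_mem_left _ _ hm

open RingTheory.Sequence in
theorem prime_of_depth_two {A : Type u} [CommRing A] [IsRegularRing A] (gs : List A)
    (hgs : IsWeaklyRegular A gs) (I : Ideal A) (hI : Ideal.ofList gs = I)
    (hloc : ∀ p : Ideal A, p.IsPrime → I ≤ p → (((gs.length + 2 : ℕ) : ℕ∞) ≤ p.height) ∨
      (∀ x y, x * y ∈ I → (∃ s ∉ p, s * x ∈ I) ∨ (∃ s ∉ p, s * y ∈ I)))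
    (hconn : ∀ c, c * (1 - c) ∈ I → c ∈ I ∨ 1 - c ∈ I) (x y : A) (hxy : x * y ∈ I) :
    x ∈ I ∨ y ∈ I := by
  classical
  have hnoeth : IsNoetherianRing A := inferInstance
  let J₁ : Ideal A := Submodule.colon I {x}
  let J₂ : Ideal A := Submodule.colon I (J₁ : Set A)
  have hJ₁ : ∀ z, z ∈ J₁ ↔ z * x ∈ I := fun z => Submodule.mem_colon_singleton
  have hJ₂ : ∀ z, z ∈ J₂ ↔ ∀ w ∈ J₁, z * w ∈ I := fun z => Submodule.mem_colon
  have hIJ : I ≤ J₁ := fun z hz => (hJ₁ z).2 (I.mul_mem_right _ hz)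
  have hK : ∀ P : Ideal A, P.IsPrime → J₁ ⊔ J₂ ≤ P → ((gs.length + 2 : ℕ) : ℕ∞) ≤ P.height := by
    intro P hP hKP
    have h1 : J₁ ≤ P := le_sup_left.trans hKP
    have h2 : J₂ ≤ P := le_sup_right.trans hKP
    rcases hloc P hP (hIJ.trans h1) with h | h
    · exact h
    · exfalso
      obtain ⟨S, hS⟩ := (isNoetherianRing_iff_ideal_fg A).1 hnoeth J₁
      have h3 : ∀ w, ∃ s, s ∉ P ∧ (w ∈ S → s * w ∈ I) := by
        intro w
        by_cases hw : w ∈ S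
        · have hw' : w ∈ J₁ := by rw [← hS]; exact Ideal.subset_span hw
          rcases h w x ((hJ₁ w).1 hw') with ⟨s, hs, hs'⟩ | ⟨s, hs, hs'⟩
          · exact ⟨s, hs, fun _ => hs'⟩
          · exact absurd (h1 ((hJ₁ s).2 hs')) hs
        · exact ⟨1, fun h => hP.ne_top ((Ideal.eq_top_iff_one _).2 h), fun h => absurd h hw⟩
      choose s hs hs' using h3
      have h4 : ∏ w ∈ S, s w ∉ P := by
        intro h
        obtain ⟨w, _, hw⟩ := (hP.prod_mem_iff).1 h
        exact hs w hw
      apply h4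
      apply h2
      rw [hJ₂]
      have h5 : J₁ ≤ Submodule.colon I {∏ w ∈ S, s w} := by
        rw [← hS]
        refine Ideal.span_le.2 fun w hw => ?_
        refine Submodule.mem_colon_singleton.2 ?_
        rw [smul_eq_mul, ← Finset.mul_prod_erase S s hw, ← mul_assoc, mul_comm w]
        exact I.mul_mem_right _ (hs' w hw)
      intro w hw
      rw [mul_comm]
      exact Submodule.mem_colon_singleton.1 (h5 hw)
  obtain ⟨a, haK, ha, hgs'⟩ := exists_nzd_of_height gs hgs (J₁ ⊔ J₂) (fun P hP _ h =>
    le_trans (by norm_cast; omega) (hK P hP h))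
  obtain ⟨b, hbK, hb, -⟩ := exists_nzd_of_height _ hgs' (J₁ ⊔ J₂) (fun P hP _ h =>
    le_trans (by simp; norm_cast) (hK P hP h))
  rw [Ideal.ofList_append, Ideal.ofList_singleton, hI] at hb
  rw [hI] at ha
  obtain ⟨a₁, ha₁, a₂, ha₂, rfl⟩ := Submodule.mem_sup.1 haK
  obtain ⟨b₁, hb₁, b₂, hb₂, rfl⟩ := Submodule.mem_sup.1 hbK
  have h1 : a₁ ∈ I ⊔ Ideal.span {a₁ + a₂} := by
    apply hb
    have h2 : (b₁ + b₂) * a₁ = (b₂ * a₁ - a₂ * b₁) + b₁ * (a₁ + a₂) := by ring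
    rw [h2]
    refine Ideal.add_mem _ (Ideal.mem_sup_left ?_) (Ideal.mem_sup_right ?_)
    · exact I.sub_mem ((hJ₂ _).1 hb₂ _ ha₁) ((hJ₂ _).1 ha₂ _ hb₁)
    · exact Ideal.mul_mem_left _ _ (Ideal.subset_span rfl)
  obtain ⟨i, hi, t, ht, hit⟩ := Submodule.mem_sup.1 h1
  obtain ⟨c, rfl⟩ := Ideal.mem_span_singleton'.1 ht
  have hc₁ : c ∈ J₁ := by
    rw [hJ₁]
    apply ha
    have : (a₁ + a₂) * (c * x) = a₁ * x - i * x := by linear_combination x * hit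
    rw [this]
    exact I.sub_mem ((hJ₁ _).1 ha₁) (I.mul_mem_right _ hi)
  have hc₂ : 1 - c ∈ J₂ := by
    rw [hJ₂]
    intro w hw
    apply ha
    have : (a₁ + a₂) * ((1 - c) * w) = a₂ * w + i * w := by linear_combination -w * hit
    rw [this]
    exact I.add_mem ((hJ₂ _).1 ha₂ _ hw) (I.mul_mem_right _ hi)
  have hcc : c * (1 - c) ∈ I := by
    rw [mul_comm]
    exact (hJ₂ _).1 hc₂ _ hc₁
  rcases hconn c hcc with h | h
  · right
    have h3 := (hJ₂ _).1 hc₂ y ((hJ₁ y).2 (by rwa [mul_comm]))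
    have : y = (1 - c) * y + c * y := by ring
    rw [this]
    exact I.add_mem h3 (I.mul_mem_right _ h)
  · left
    have : x = (1 - c) * x + c * x := by ring
    rw [this]
    exact I.add_mem (I.mul_mem_right _ h) ((hJ₁ c).1 hc₁)

theorem dim_quot_add_le {A : Type*} [CommRing A] (J : Ideal A) (n h : ℕ)
    (hA : ringKrullDim A ≤ n)
    (hJ : ∀ P : Ideal A, P.IsPrime → J ≤ P → (h : ℕ∞) ≤ P.height) :
    ringKrullDim (A ⧸ J) + h ≤ n := by
  by_cases hJt : J = ⊤
  · have : Subsingleton (A ⧸ J) := Ideal.Quotient.subsingleton_iff.2 hJt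
    rw [ringKrullDim_eq_bot_of_subsingleton]
    simp
  have hser : ∀ s : LTSeries (PrimeSpectrum.zeroLocus (J : Set A)), s.length + h ≤ n := by
    intro s
    have hi : ∀ i : Fin (s.length + 1), ((h + i : ℕ) : ℕ∞) ≤ (s i).1.asIdeal.height := by
      intro i
      induction i using Fin.induction with
      | zero =>
        simpa using hJ _ (s 0).1.2 (s 0).2
      | succ i ih =>
        have h1 : (s i.castSucc).1.asIdeal < (s i.succ).1.asIdeal := s.step i
        have h2 := Ideal.height_add_one_le_of_lt_of_isPrime h1
        refine le_trans ?_ h2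
        have h3 : ((h + i.succ : ℕ) : ℕ∞) = ((h + i.castSucc : ℕ) : ℕ∞) + 1 := by
          simp [add_assoc]
        rw [h3]
        gcongr
    have h1 := hi (Fin.last _)
    have h2 : ((s (Fin.last _)).1.asIdeal.height : WithBot ℕ∞) ≤ n :=
      (Ideal.height_le_ringKrullDim_of_ne_top (s (Fin.last _)).1.2.ne_top).trans hA
    have h3 : (((h + s.length : ℕ) : ℕ∞) : WithBot ℕ∞) ≤ ((n : ℕ∞) : WithBot ℕ∞) :=
      le_trans (WithBot.coe_le_coe.2 (by simpa using h1)) h2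
    have h4 : h + s.length ≤ n := by exact_mod_cast h3
    omega
  have hhn : h ≤ n := by
    obtain ⟨m, hm, hle⟩ := Ideal.exists_le_maximal J hJt
    have := hser (RelSeries.singleton _ ⟨⟨m, hm.isPrime⟩, hle⟩)
    simpa using this
  have hdim : ringKrullDim (A ⧸ J) ≤ ((n - h : ℕ) : WithBot ℕ∞) := by
    rw [ringKrullDim_quotient]
    refine iSup_le fun s => ?_
    have := hser s
    exact_mod_cast (by omega : s.length ≤ n - h)
  calc ringKrullDim (A ⧸ J) + h ≤ ((n - h : ℕ) : WithBot ℕ∞) + h := by gcongr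
    _ = ((n - h + h : ℕ) : WithBot ℕ∞) := by push_cast; rfl
    _ = n := by rw [Nat.sub_add_cancel hhn]

theorem constantCoeff_eq_zero_of_mem {N l : ℕ} (q : Fin l → MvPolynomial (Fin N) ℂ)
    (hhom : ∀ i, (q i).IsHomogeneous 2) (f : MvPolynomial (Fin N) ℂ)
    (hf : f ∈ Ideal.span (Set.range q)) : constantCoeff f = 0 := by
  have : Ideal.span (Set.range q) ≤ RingHom.ker (constantCoeff (R := ℂ) (σ := Fin N)) := by
    rw [Ideal.span_le]
    rintro _ ⟨i, rfl⟩
    rw [SetLike.mem_coe, RingHom.mem_ker, constantCoeff_eq]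
    exact (hhom i).coeff_eq_zero (by simp)
  exact this hf

theorem connected_aux {N l : ℕ} (q : Fin l → MvPolynomial (Fin N) ℂ)
    (hhom : ∀ i, (q i).IsHomogeneous 2) (c : MvPolynomial (Fin N) ℂ)
    (hc : c * (1 - c) ∈ Ideal.span (Set.range q)) (hc0 : constantCoeff c = 0) :
    c ∈ Ideal.span (Set.range q) := by
  letI := MvPolynomial.gradedAlgebra (σ := Fin N) (R := ℂ)
  have hI : (Ideal.span (Set.range q)).IsHomogeneous (homogeneousSubmodule (Fin N) ℂ) := by
    refine Ideal.homogeneous_span _ _ ?_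
    rintro _ ⟨i, rfl⟩
    exact ⟨2, hhom i⟩
  rw [mem_iff_homogeneousComponent_mem hI]
  intro n
  have hpow : ∀ m : ℕ, c - c ^ (m + 1) ∈ Ideal.span (Set.range q) := by
    intro m
    induction m with
    | zero => simp
    | succ m ih =>
      have : c - c ^ (m + 1 + 1) = (c - c ^ (m + 1)) + c ^ m * (c * (1 - c)) := by ring
      rw [this]
      exact Ideal.add_mem _ ih (Ideal.mul_mem_left _ _ hc)
  have h1 : c ∈ idealOfVars (Fin N) ℂ := by
    have := (mem_pow_idealOfVars_iff' 1 c).2 (by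
      intro x hx
      have : x = 0 := by
        rw [← Finsupp.degree_eq_zero_iff]; omega
      rw [this]; exact hc0)
    simpa using this
  have h2 : c ^ (n + 1) ∈ idealOfVars (Fin N) ℂ ^ (n + 1) := Ideal.pow_mem_pow h1 _
  rw [mem_pow_idealOfVars_iff'] at h2
  have h3 : homogeneousComponent n (c ^ (n + 1)) = 0 := by
    ext x
    rw [coeff_homogeneousComponent]
    split_ifs with h
    · rw [h2 x (by omega), coeff_zero]
    · rw [coeff_zero]
  have h4 := homogeneousComponent_mem_of_mem hI (hpow n) n
  rwa [map_sub, h3, sub_zero] at h4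

theorem connected_quadrics {N l : ℕ} (q : Fin l → MvPolynomial (Fin N) ℂ)
    (hhom : ∀ i, (q i).IsHomogeneous 2) (c : MvPolynomial (Fin N) ℂ)
    (hc : c * (1 - c) ∈ Ideal.span (Set.range q)) :
    c ∈ Ideal.span (Set.range q) ∨ 1 - c ∈ Ideal.span (Set.range q) := by
  have h0 := constantCoeff_eq_zero_of_mem q hhom _ hc
  rw [map_mul, mul_eq_zero] at h0
  rcases h0 with h | h
  · exact Or.inl (connected_aux q hhom c hc h)
  · exact Or.inr (connected_aux q hhom (1 - c) (by rwa [sub_sub_cancel, mul_comm]) h)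

theorem height_origin (N : ℕ) :
    (N : ℕ∞) ≤ (RingHom.ker (constantCoeff (R := ℂ) (σ := Fin N))).height := by
  have hp : (RingHom.ker (constantCoeff (R := ℂ) (σ := Fin N))).IsPrime := RingHom.ker_isPrime _
  have h := height_trdeg N (RingHom.ker (constantCoeff (R := ℂ) (σ := Fin N))) hp 0 (by
    have hsurj : Function.Surjective
        (algebraMap ℂ (MvPolynomial (Fin N) ℂ ⧸ RingHom.ker (constantCoeff (R := ℂ) (σ := Fin N)))) := by
      intro y
      obtain ⟨f, rfl⟩ := Ideal.Quotient.mk_surjective y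
      refine ⟨constantCoeff f, ?_⟩
      change Ideal.Quotient.mk _ (C (constantCoeff f)) = _
      rw [Ideal.Quotient.eq, RingHom.mem_ker]
      simp
    have : Algebra.IsAlgebraic ℂ
        (MvPolynomial (Fin N) ℂ ⧸ RingHom.ker (constantCoeff (R := ℂ) (σ := Fin N))) := by
      refine ⟨fun y => ?_⟩
      obtain ⟨z, rfl⟩ := hsurj y
      exact isAlgebraic_algebraMap z
    simp [trdeg_eq_zero])
  simpa using h

theorem complete_intersection_of_quadrics {N l e : ℕ} (hl : 1 ≤ l)
    (hN : l + 4 ≤ N) (he : 4 ≤ e)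
    (q : Fin l → MvPolynomial (Fin N) ℂ)
    (hhom : ∀ i, (q i).IsHomogeneous 2)
    (hrk : ∀ lam : Fin l → ℂ, lam ≠ 0 →
      2 * l + e - 1 ≤ (∑ i, lam i • polarMatrix (q i)).rank) :
    (Ideal.span (Set.range q)).IsPrime ∧
    ringKrullDim (MvPolynomial (Fin N) ℂ ⧸ Ideal.span (Set.range q)) = (N - l : ℕ) ∧
    ringKrullDim (MvPolynomial (Fin N) ℂ ⧸
        (Ideal.span (Set.range q) ⊔ Ideal.span
          {p | ∃ g : Fin l → Fin N,
            p = (Matrix.of fun i j => MvPolynomial.pderiv (g j) (q i)).det}))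
      + (e : ℕ)
      ≤ ringKrullDim (MvPolynomial (Fin N) ℂ ⧸ Ideal.span (Set.range q)) := by
  set I := Ideal.span (Set.range q) with hI
  have hA : ringKrullDim (MvPolynomial (Fin N) ℂ) ≤ (N : ℕ) := by
    rw [MvPolynomial.ringKrullDim_of_isNoetherianRing, ringKrullDim_eq_zero_of_field]
    simp
  have hqP : ∀ P : Ideal (MvPolynomial (Fin N) ℂ), I ≤ P → ∀ i, q i ∈ P := fun P h i =>
    h (Ideal.subset_span ⟨i, rfl⟩)
  have hmin : ∀ P : Ideal (MvPolynomial (Fin N) ℂ), P.IsPrime →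
      (∀ g : Fin l → Fin N, (Matrix.of fun i j => pderiv (g j) (q i)).det ∈ P) →
      ((l + e : ℕ) : ℕ∞) ≤ P.height := by
    intro P hP hg
    have h0 := height_of_minors q hhom hrk P hg
    generalize P.height = h at h0 ⊢
    induction h using ENat.recTopCoe with
    | top => simp
    | coe h => norm_cast at h0 ⊢; omega
  have hdim : ringKrullDim (MvPolynomial (Fin N) ℂ ⧸ I) = (N - l : ℕ) := by
    have hu := dim_quot_add_le I N l hA (fun P hP hIP =>
      height_ge_of_mem (r := 2 * l + e - 1) (by omega) q hhom hrk P (hqP P hIP))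
    have hlow : ((N : ℕ∞) : WithBot ℕ∞) ≤ ringKrullDim (MvPolynomial (Fin N) ℂ ⧸ I) + (l : ℕ) := by
      have hp : (RingHom.ker (constantCoeff (R := ℂ) (σ := Fin N))).IsPrime := RingHom.ker_isPrime _
      have h1 := Ideal.height_le_ringKrullDim_quotient_add_encard
        (p := RingHom.ker (constantCoeff (R := ℂ) (σ := Fin N))) (Set.range q) (by
          rintro _ ⟨i, rfl⟩
          exact constantCoeff_eq_zero_of_mem q hhom _ (Ideal.subset_span ⟨i, rfl⟩))
      refine (WithBot.coe_le_coe.2 (height_origin N)).trans (h1.trans ?_)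
      gcongr
      have : (Set.range q).encard ≤ (l : ℕ∞) := by
        rw [← Set.image_univ]
        refine (Set.encard_image_le _ _).trans ?_
        simp
      exact_mod_cast this
    generalize ringKrullDim (MvPolynomial (Fin N) ℂ ⧸ I) = d at hu hlow ⊢
    induction d using WithBot.recBotCoe with
    | bot => simp at hlow
    | coe d =>
      induction d using ENat.recTopCoe with
      | top =>
        have h5 : (((⊤ : ℕ∞) + ((l : ℕ) : ℕ∞) : ℕ∞) : WithBot ℕ∞) ≤ ((N : ℕ∞) : WithBot ℕ∞) := hu
        rw [WithBot.coe_le_coe, top_add] at h5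
        simp at h5
      | coe d =>
        have h1 : d + l ≤ N := by exact_mod_cast hu
        have h2 : N ≤ d + l := by exact_mod_cast hlow
        have : d = N - l := by omega
        rw [this]
        rfl
  refine ⟨?_, hdim, ?_⟩
  · refine ⟨?_, ?_⟩
    · rw [Ne, Ideal.eq_top_iff_one]
      intro h
      simpa using constantCoeff_eq_zero_of_mem q hhom _ h
    · intro x y hxy
      refine prime_of_depth_two (List.ofFn q)
        (weakly_regular_quadrics (r := 2 * l + e - 1) l (by omega) q hhom hrk) I (ofList_ofFn q)
        ?_ (connected_quadrics q hhom) x y hxy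
      intro p hp hIp
      by_cases h : ∀ g : Fin l → Fin N, (Matrix.of fun i j => pderiv (g j) (q i)).det ∈ p
      · left
        refine le_trans ?_ (hmin p hp h)
        rw [List.length_ofFn]
        norm_cast
        omega
      · right
        push Not at h
        obtain ⟨g, hg⟩ := h
        exact (jacobian_local q p (hqP p hIp) g hg).2
  · have hrN : 2 * l + e - 1 ≤ N := by
      have := (hrk (fun _ => 1) (fun h => by
        have := congrFun h ⟨0, hl⟩
        simp at this)).trans (Matrix.rank_le_width _)
      exact this
    have h1 := dim_quot_add_le (I ⊔ Ideal.span {p | ∃ g : Fin l → Fin N,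
            p = (Matrix.of fun i j => MvPolynomial.pderiv (g j) (q i)).det}) N (l + e) hA
      (fun P hP hJ => hmin P hP fun g =>
        hJ (Ideal.mem_sup_right (Ideal.subset_span ⟨g, rfl⟩)))
    rw [hdim]
    generalize ringKrullDim (MvPolynomial (Fin N) ℂ ⧸ (I ⊔ Ideal.span {p | ∃ g : Fin l → Fin N,
            p = (Matrix.of fun i j => MvPolynomial.pderiv (g j) (q i)).det})) = d at h1 ⊢
    induction d using WithBot.recBotCoe with
    | bot => simp
    | coe d =>
      induction d using ENat.recTopCoe with
      | top =>
        have h5 : (((⊤ : ℕ∞) + (((l + e : ℕ) : ℕ) : ℕ∞) : ℕ∞) : WithBot ℕ∞) ≤ ((N : ℕ∞) : WithBot ℕ∞) := h1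
        rw [WithBot.coe_le_coe, top_add] at h5
        simp at h5
      | coe d =>
        have h2 : d + (l + e) ≤ N := by exact_mod_cast h1
        have h3 : d + e ≤ N - l := by omega
        have h4 : ((d + e : ℕ) : ℕ∞) ≤ ((N - l : ℕ) : ℕ∞) := Nat.cast_le.2 h3
        have h5 := WithBot.coe_le_coe.2 h4
        exact h5
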